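/- Let d > 2 be an integer, J an admissible kernel on ℤ^d, and G ∈ 𝒢 with (J,G) satisfying Assumption G. Let 0 ≤ β' ≤ β < β_c and s ∈ ℝ. If Z_{β',β}·M_{β'}(s·ξ(β')/ξ(β)) < 1, then M_β(s) ≤ (χ(β')/χ(β)) · M_{β'}(s·ξ(β')/ξ(β)) / (1 − Z_{β',β}·M_{β'}(s·ξ(β')/ξ(β))). -/

import Mathlib

open scoped ENNReal

noncomputable section

namespace Blackbox

/-- Supremum norm of a lattice point. -/
def supNorm {d : ℕ} (x : Fin d → ℤ) : ℝ :=
  ((Finset.univ.sup fun i => (x i).natAbs : ℕ) : ℝ)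

/-- Squared Euclidean norm of a lattice point. -/
def sqNorm {d : ℕ} (x : Fin d → ℤ) : ℝ :=
  ∑ i, ((x i : ℝ)) ^ 2

/-- Invariance under coordinate permutations and sign flips of individual coordinates. -/
def IsSymmFun {d : ℕ} {α : Type*} (f : (Fin d → ℤ) → α) : Prop :=
  ∀ (π : Equiv.Perm (Fin d)) (e : Fin d → Bool) (x : Fin d → ℤ),
    f (fun i => (if e i then -1 else 1) * x (π i)) = f x

/-- First coordinate (dot product with `e₁`). -/
def e1 {d : ℕ} {α : Type*} [Zero α] (y : Fin d → α) : α :=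
  if h : 0 < d then y ⟨0, h⟩ else 0

/-- An admissible kernel on `ℤ^d` with constant `c₀`. -/
structure AdmissibleKernel (d : ℕ) (c₀ : ℝ) where
  J : (Fin d → ℤ) → ℝ
  nonneg : ∀ x, 0 ≤ J x
  zero_at_zero : J 0 = 0
  summable : Summable J
  norm_one : ∑' x, J x = 1
  symm : IsSymmFun J
  R : ℝ
  R_ge_one : 1 ≤ R
  range_le : ∀ x, 0 < J x → supNorm x ≤ R
  range_attained : ∃ x, 0 < J x ∧ supNorm x = R
  summable_sq : Summable fun x => sqNorm x * J x
  sigma_lower : c₀ * R ≤ Real.sqrt (∑' x, sqNorm x * J x)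
  J_upper : ∀ x, J x ≤ c₀⁻¹ / R ^ d

/-- `σ_J`, the square root of the variance of the kernel. -/
def AdmissibleKernel.sigma {d : ℕ} {c₀ : ℝ} (K : AdmissibleKernel d c₀) : ℝ :=
  Real.sqrt (∑' x, sqNorm x * K.J x)

/-- A family `G ∈ 𝒢` together with an admissible kernel `J` such that `(J,G)` satisfies
Assumption G (with error-term family `H`). -/
structure Model (d : ℕ) (c₀ : ℝ) where
  K : AdmissibleKernel d c₀
  G : ℝ → (Fin d → ℤ) → ℝ≥0∞
  βc : ℝ≥0∞
  βc_pos : 0 < βc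
  init : ∀ x, G 0 x = if x = 0 then 1 else 0
  G' : ℝ → (Fin d → ℤ) → ℝ
  mono : ∀ (x : Fin d → ℤ) ⦃β₁ β₂ : ℝ⦄, 0 ≤ β₁ → β₁ ≤ β₂ →
    ENNReal.ofReal β₂ ≤ βc → G β₁ x ≤ G β₂ x
  deriv : ∀ (x : Fin d → ℤ) ⦃β : ℝ⦄, 0 ≤ β → ENNReal.ofReal β < βc →
    HasDerivWithinAt (fun t => (G t x).toReal) (G' β x) (Set.Ici 0) β
  symm : ∀ β, IsSymmFun (G β)
  expDecay : ∀ ⦃β : ℝ⦄, 0 ≤ β → ENNReal.ofReal β < βc →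
    ∃ C > (0:ℝ), ∃ c > (0:ℝ), ∀ x, G β x ≤ ENNReal.ofReal (C * Real.exp (-c * supNorm x))
  limit : βc ≠ ⊤ → ∀ x, G βc.toReal x = ⨆ β ∈ Set.Ico (0 : ℝ) βc.toReal, G β x
  I1 : ∀ ⦃β' β : ℝ⦄, 0 ≤ β' → β' ≤ β → ENNReal.ofReal β < βc →
    ∀ x, G β x ≤ G β' x + ENNReal.ofReal (β - β') *
      ∑' p : (Fin d → ℤ) × (Fin d → ℤ),
        G β' p.1 * ENNReal.ofReal (K.J p.2) * G β (x - p.1 - p.2)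
  H : ℝ → (Fin d → ℤ) → ℝ
  H_nonneg : ∀ β x, 0 ≤ H β x
  H_zero : ∀ x, H 0 x = 0
  H_symm : ∀ β x, H β (-x) = H β x
  H_cont : ∀ x, ContinuousOn (fun β => H β x)
    {β : ℝ | 0 ≤ β ∧ ENNReal.ofReal β < βc}
  H_expDecay : ∀ ⦃β : ℝ⦄, 0 ≤ β → ENNReal.ofReal β < βc →
    ∃ C > (0:ℝ), ∃ c > (0:ℝ), ∀ x, H β x ≤ C * Real.exp (-c * supNorm x)
  I2 : ∀ ⦃β : ℝ⦄, 0 ≤ β → ENNReal.ofReal β < βc → ∀ x,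
    (∑' p : (Fin d → ℤ) × (Fin d → ℤ),
      (G β p.1).toReal * (K.J p.2 - H β p.2) * (G β (x - p.1 - p.2)).toReal)
      ≤ G' β x

namespace Model

variable {d : ℕ} {c₀ : ℝ}

def sigma (M : Model d c₀) : ℝ := M.K.sigma

/-- `F_β = J * G_β`. -/
def F (M : Model d c₀) (β : ℝ) (x : Fin d → ℤ) : ℝ≥0∞ :=
  ∑' y, ENNReal.ofReal (M.K.J y) * M.G β (x - y)

/-- The susceptibility `χ(β)`. -/
def chi (M : Model d c₀) (β : ℝ) : ℝ≥0∞ := ∑' x, M.G β x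

/-- `ξ(β)²`. -/
def xiSq (M : Model d c₀) (β : ℝ) : ℝ≥0∞ :=
  (∑' x, ENNReal.ofReal (sqNorm x) * M.F β x) / M.chi β

/-- The correlation length of order two, `ξ(β)`. -/
def xi (M : Model d c₀) (β : ℝ) : ℝ := Real.sqrt (M.xiSq β).toReal

/-- The error term `E(β)`. -/
def E (M : Model d c₀) (β : ℝ) : ℝ≥0∞ :=
  ⨆ t ∈ Set.Icc (0 : ℝ) β,
    (ENNReal.ofReal (∑' x, M.H t x) +
      ENNReal.ofReal (∑' x, sqNorm x * M.H t x) / M.xiSq t)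

/-- `β(δ)`. -/
def betaOf (M : Model d c₀) (δ : ℝ) : ℝ :=
  sSup {β : ℝ | 0 ≤ β ∧ ENNReal.ofReal β < M.βc ∧ M.E β < ENNReal.ofReal δ}

/-- One-step distribution of the effective random walk at parameter `β`. -/
def effStep (M : Model d c₀) (β : ℝ) (y : Fin d → ℤ) : ℝ≥0∞ :=
  M.F β y / M.chi β

/-- `k`-step distribution of the effective random walk at parameter `β`. -/
def effIter (M : Model d c₀) (β : ℝ) : ℕ → (Fin d → ℤ) → ℝ≥0∞
  | 0 => fun x => if x = 0 then 1 else 0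
  | n + 1 => fun x => ∑' y, M.effStep β y * M.effIter β n (x - y)

/-- Moment generating function `M_β(s)` of the first coordinate of one step of the
effective random walk. -/
def Mgf (M : Model d c₀) (β s : ℝ) : ℝ≥0∞ :=
  ∑' y : Fin d → ℤ, M.effStep β y * ENNReal.ofReal (Real.exp (s / M.xi β * ((e1 y : ℤ) : ℝ)))

end Model

end Blackbox
open Blackbox

/-!
By (I.1), `G_β ≤ G_β' + f * G_β` with `f := (β - β') F_β'`, so `G_β` is a subsolution of a renewal
equation. Assume first that `f` has mass `< 1`: then a bounded subsolution is dominated by the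
Neumann series `∑ₙ f^{*n} * G_β'`. For `a := s / ξ(β)` the weight `e^{a x₁}` is multiplicative, so
summing it against the Neumann series gives a geometric series with ratio `∑ e^{a x₁} f(x)`.
This ratio is `Z_{β',β} M_β'(s ξ(β') / ξ(β)) < 1`; since `f` is even and `cosh ≥ 1`, it dominates
the mass of `f`, which is therefore `< 1` as well. Convolving with `J` turns the resulting bound on
`G_β` into one on `F_β`. The rescaling of the argument requires `0 < ξ(β') < ∞`, for which the
exponential decay of `G_β'` is needed.
-/

namespace Blackbox

section Convolution

variable {V : Type*} [AddCommGroup V]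

/-- Convolution of `ℝ≥0∞`-valued functions on a discrete group, with the arguments in the order
that makes `M.F β` definitionally a convolution. -/
def conv (f g : V → ℝ≥0∞) (x : V) : ℝ≥0∞ := ∑' y, f y * g (x - y)

lemma conv_mono_right (f : V → ℝ≥0∞) {g h : V → ℝ≥0∞} (hgh : g ≤ h) : conv f g ≤ conv f h :=
  fun x => ENNReal.tsum_le_tsum fun y => mul_le_mul_right (hgh (x - y)) (f y)

lemma conv_add (f g h : V → ℝ≥0∞) : conv f (g + h) = conv f g + conv f h := by
  ext x
  simp only [conv, Pi.add_apply, mul_add, ENNReal.tsum_add]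

lemma conv_tsum {ι : Type*} (f : V → ℝ≥0∞) (g : ι → V → ℝ≥0∞) (x : V) :
    conv f (fun z => ∑' i, g i z) x = ∑' i, conv f (g i) x := by
  simp only [conv, ← ENNReal.tsum_mul_left]
  exact ENNReal.tsum_comm

lemma tsum_mul_conv_eq_tsum_tsum (φ f g : V → ℝ≥0∞) :
    ∑' x, φ x * conv f g x = ∑' y, ∑' z, φ (y + z) * (f y * g z) := by
  simp only [conv, ← ENNReal.tsum_mul_left]
  rw [ENNReal.tsum_comm]
  refine tsum_congr fun y => ?_
  rw [← (Equiv.addLeft y).tsum_eq]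
  simp only [Equiv.coe_addLeft, add_sub_cancel_left]

lemma tsum_mul_conv {φ : V → ℝ≥0∞} (hφ : ∀ x y, φ (x + y) = φ x * φ y) (f g : V → ℝ≥0∞) :
    ∑' x, φ x * conv f g x = (∑' x, φ x * f x) * ∑' x, φ x * g x := by
  have factor (y z : V) : φ (y + z) * (f y * g z) = φ y * f y * (φ z * g z) := by
    rw [hφ, mul_mul_mul_comm]
  simp only [tsum_mul_conv_eq_tsum_tsum, factor, ENNReal.tsum_mul_left, ENNReal.tsum_mul_right]

lemma tsum_mul_conv_le {φ : V → ℝ≥0∞} (hφ : ∀ x y, φ (x + y) ≤ φ x * φ y) (f g : V → ℝ≥0∞) :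
    ∑' x, φ x * conv f g x ≤ (∑' x, φ x * f x) * ∑' x, φ x * g x := by
  rw [tsum_mul_conv_eq_tsum_tsum, ← ENNReal.tsum_mul_right]
  gcongr with y
  rw [← ENNReal.tsum_mul_left]
  refine ENNReal.tsum_le_tsum fun z => ?_
  calc φ (y + z) * (f y * g z) ≤ φ y * φ z * (f y * g z) := by
        gcongr
        exact hφ y z
    _ = φ y * f y * (φ z * g z) := mul_mul_mul_comm _ _ _ _

lemma conv_conv_apply (f g h : V → ℝ≥0∞) (x : V) :
    conv (conv f g) h x = ∑' p : V × V, g p.1 * f p.2 * h (x - p.1 - p.2) := by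
  calc conv (conv f g) h x
      = ∑' y, h (x - y) * conv f g y := tsum_congr fun y => mul_comm _ _
    _ = ∑' y, ∑' z, h (x - (y + z)) * (f y * g z) := tsum_mul_conv_eq_tsum_tsum _ f g
    _ = ∑' z, ∑' y, g z * f y * h (x - z - y) := by
      rw [ENNReal.tsum_comm]
      refine tsum_congr fun z => tsum_congr fun y => ?_
      rw [sub_sub, add_comm z y]
      ring
    _ = ∑' p : V × V, g p.1 * f p.2 * h (x - p.1 - p.2) :=
      (ENNReal.tsum_prod' (f := fun p : V × V => g p.1 * f p.2 * h (x - p.1 - p.2))).symm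

lemma conv_even {f g : V → ℝ≥0∞} (hf : f.Even) (hg : g.Even) : (conv f g).Even := fun x => by
  rw [conv, ← (Equiv.neg V).tsum_eq]
  refine tsum_congr fun y => ?_
  rw [Equiv.neg_apply, hf, neg_sub_neg, ← neg_sub, hg]

/-- The Neumann series `∑ₙ f^{*n} * g`, the least solution `u` of the renewal equation
`u = g + f * u`. -/
def neumannSeries (f g : V → ℝ≥0∞) (x : V) : ℝ≥0∞ := ∑' n : ℕ, (conv f)^[n] g x

lemma neumannSeries_eq_add_conv (f g : V → ℝ≥0∞) :
    neumannSeries f g = g + conv f (neumannSeries f g) := by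
  ext x
  calc neumannSeries f g x
      = g x + ∑' n : ℕ, (conv f)^[n + 1] g x := tsum_eq_zero_add' ENNReal.summable
    _ = g x + conv f (neumannSeries f g) x := by
      simp only [Function.iterate_succ_apply', ← conv_tsum]
      rfl

lemma tsum_mul_iterate_conv {φ : V → ℝ≥0∞} (hφ : ∀ x y, φ (x + y) = φ x * φ y)
    (f g : V → ℝ≥0∞) (n : ℕ) :
    ∑' x, φ x * (conv f)^[n] g x = (∑' x, φ x * f x) ^ n * ∑' x, φ x * g x := by
  induction n with
  | zero => simp
  | succ n ih => rw [Function.iterate_succ_apply', tsum_mul_conv hφ, ih, pow_succ', mul_assoc]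

lemma tsum_mul_neumannSeries {φ : V → ℝ≥0∞} (hφ : ∀ x y, φ (x + y) = φ x * φ y)
    (f g : V → ℝ≥0∞) :
    ∑' x, φ x * neumannSeries f g x = (∑' x, φ x * g x) / (1 - ∑' x, φ x * f x) := by
  simp only [neumannSeries, ← ENNReal.tsum_mul_left]
  rw [ENNReal.tsum_comm]
  simp only [tsum_mul_iterate_conv hφ, ENNReal.tsum_mul_right, ENNReal.tsum_geometric]
  rw [mul_comm, div_eq_mul_inv]

lemma eq_zero_of_le_conv {f v : V → ℝ≥0∞} (hf : ∑' x, f x < 1) (hv : ⨆ x, v x ≠ ⊤)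
    (h : v ≤ conv f v) : v = 0 := by
  have contraction : ⨆ x, v x ≤ (∑' x, f x) * ⨆ x, v x := iSup_le fun x =>
    calc v x ≤ ∑' y, f y * v (x - y) := h x
      _ ≤ ∑' y, f y * ⨆ x, v x := by
        gcongr with y
        exact le_iSup v (x - y)
      _ = (∑' x, f x) * ⨆ x, v x := ENNReal.tsum_mul_right
  by_contra hne
  have hpos : ⨆ x, v x ≠ 0 := fun h0 => hne (funext (by simpa using h0))
  exact contraction.not_gt ((ENNReal.mul_lt_mul_left hpos hv hf).trans_eq (one_mul _))

theorem le_neumannSeries_of_le_add_conv {f g g₀ : V → ℝ≥0∞} (hf : ∑' x, f x < 1)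
    (hg : ⨆ x, g x ≠ ⊤) (h : g ≤ g₀ + conv f g) : g ≤ neumannSeries f g₀ := by
  set u := neumannSeries f g₀ with hu
  have excess_le : g - u ≤ conv f (g - u) := by
    rw [tsub_le_iff_left]
    calc g ≤ g₀ + conv f g := h
      _ ≤ g₀ + conv f (u + (g - u)) := by
        gcongr
        exact conv_mono_right f le_add_tsub
      _ = u + conv f (g - u) := by
        rw [conv_add, ← add_assoc, hu, ← neumannSeries_eq_add_conv]
  have excess_bounded : ⨆ x, (g - u) x ≠ ⊤ :=
    ne_top_of_le_ne_top hg (iSup_mono fun x => tsub_le_self)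
  exact tsub_eq_zero_iff_le.mp (eq_zero_of_le_conv hf excess_bounded excess_le)

theorem tsum_mul_le_div_of_le_add_conv {φ f g g₀ : V → ℝ≥0∞}
    (hφ : ∀ x y, φ (x + y) = φ x * φ y) (hf : ∑' x, f x < 1) (hg : ⨆ x, g x ≠ ⊤)
    (h : g ≤ g₀ + conv f g) :
    ∑' x, φ x * g x ≤ (∑' x, φ x * g₀ x) / (1 - ∑' x, φ x * f x) := by
  rw [← tsum_mul_neumannSeries hφ]
  gcongr with x
  exact le_neumannSeries_of_le_add_conv hf hg h x

end Convolution

lemma tsum_pi_fin_prod {α : Type*} {n : ℕ} (f : Fin n → α → ℝ≥0∞) :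
    ∑' x : Fin n → α, ∏ i, f i (x i) = ∏ i, ∑' k, f i k := by
  induction n with
  | zero => simp [tsum_fintype]
  | succ n ih =>
    rw [← (Fin.consEquiv fun _ : Fin (n + 1) => α).tsum_eq, ENNReal.tsum_prod']
    simp only [Fin.consEquiv_apply, Fin.prod_univ_succ, Fin.cons_zero, Fin.cons_succ,
      ENNReal.tsum_mul_left, ih, ENNReal.tsum_mul_right]

section ExpNorm

/-- The submultiplicative weight `e^{a ‖x‖}`, used to express exponential decay; on `Fin d → ℤ`
the norm is the supremum norm. -/
def expNorm {E : Type*} [Norm E] (a : ℝ) (x : E) : ℝ≥0∞ := ENNReal.ofReal (Real.exp (a * ‖x‖))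

lemma expNorm_add_left {E : Type*} [Norm E] (a b : ℝ) (x : E) :
    expNorm (a + b) x = expNorm a x * expNorm b x := by
  rw [expNorm, add_mul, Real.exp_add, ENNReal.ofReal_mul (Real.exp_nonneg _)]
  rfl

variable {E : Type*} [SeminormedAddCommGroup E] {a : ℝ}

lemma expNorm_add_le (ha : 0 ≤ a) (x y : E) :
    expNorm a (x + y) ≤ expNorm a x * expNorm a y := by
  rw [expNorm, expNorm, expNorm, ← ENNReal.ofReal_mul (Real.exp_nonneg _), ← Real.exp_add,
    ← mul_add]
  gcongr
  exact norm_add_le x y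

lemma tsum_expNorm_mul_conv_le (ha : 0 ≤ a) (f g : E → ℝ≥0∞) :
    ∑' x, expNorm a x * conv f g x ≤ (∑' x, expNorm a x * f x) * ∑' x, expNorm a x * g x :=
  tsum_mul_conv_le (expNorm_add_le ha) f g

lemma one_le_expNorm (ha : 0 ≤ a) (x : E) : 1 ≤ expNorm a x :=
  ENNReal.one_le_ofReal.mpr (Real.one_le_exp (by positivity))

lemma tsum_expNorm_int_ne_top (ha : a < 0) : ∑' k : ℤ, expNorm a k ≠ ⊤ := by
  have summable_nat : Summable fun n : ℕ => Real.exp (a * n) := by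
    simpa only [mul_comm a] using Real.summable_exp_nat_mul_iff.mpr ha
  exact (Summable.of_nat_of_neg (f := fun k : ℤ => Real.exp (a * ‖k‖)) (by simpa using summable_nat)
    (by simpa using summable_nat)).tsum_ofReal_ne_top

lemma expNorm_le_prod {d : ℕ} (ha : a ≤ 0) (x : Fin d → ℤ) :
    expNorm a x ≤ ∏ i, expNorm (a / (d + 1)) (x i) := by
  simp only [expNorm]
  rw [← ENNReal.ofReal_prod_of_nonneg fun i _ => Real.exp_nonneg _, ← Real.exp_sum,
    ← Finset.mul_sum]
  gcongr ENNReal.ofReal (Real.exp ?_)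
  have sum_le : ∑ i, ‖x i‖ ≤ (d + 1) * ‖x‖ := by
    calc ∑ i, ‖x i‖ ≤ ∑ _i : Fin d, ‖x‖ := Finset.sum_le_sum fun i _ => norm_le_pi_norm x i
      _ ≤ (d + 1) * ‖x‖ := by
        rw [Finset.sum_const, Finset.card_fin, nsmul_eq_mul]
        gcongr
        exact le_add_of_nonneg_right zero_le_one
  calc a * ‖x‖ = a / (d + 1) * ((d + 1) * ‖x‖) := by field_simp
    _ ≤ a / (d + 1) * ∑ i, ‖x i‖ :=
      mul_le_mul_of_nonpos_left sum_le (div_nonpos_of_nonpos_of_nonneg ha (by positivity))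

lemma tsum_expNorm_ne_top (d : ℕ) (ha : a < 0) : ∑' x : Fin d → ℤ, expNorm a x ≠ ⊤ := by
  refine ne_top_of_le_ne_top ?_ (ENNReal.tsum_le_tsum (expNorm_le_prod ha.le))
  rw [tsum_pi_fin_prod]
  exact ENNReal.prod_ne_top fun i _ =>
    tsum_expNorm_int_ne_top (div_neg_of_neg_of_pos ha (by positivity))

end ExpNorm

section Lattice

variable {d : ℕ}

lemma supNorm_eq_norm (x : Fin d → ℤ) : supNorm x = ‖x‖ := by
  simp only [supNorm, Pi.norm_def, ← NNReal.natCast_natAbs]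
  rw [← NNReal.coe_natCast, Nat.cast_finsetSup]

lemma sqNorm_pos {x : Fin d → ℤ} (hx : x ≠ 0) : 0 < sqNorm x := by
  obtain ⟨i, hi⟩ := Function.ne_iff.mp hx
  exact Finset.sum_pos' (fun j _ => sq_nonneg _)
    ⟨i, Finset.mem_univ i, sq_pos_of_ne_zero (Int.cast_ne_zero.mpr hi)⟩

lemma sqNorm_le_mul_norm_sq (x : Fin d → ℤ) : sqNorm x ≤ d * ‖x‖ ^ 2 := by
  calc sqNorm x ≤ ∑ _i : Fin d, ‖x‖ ^ 2 := Finset.sum_le_sum fun i _ => by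
        rw [← sq_abs, ← Int.norm_eq_abs]
        gcongr
        exact norm_le_pi_norm x i
    _ = d * ‖x‖ ^ 2 := by rw [Finset.sum_const, Finset.card_fin, nsmul_eq_mul]

lemma ofReal_sqNorm_le_mul_expNorm {a : ℝ} (ha : 0 < a) (x : Fin d → ℤ) :
    ENNReal.ofReal (sqNorm x) ≤ ENNReal.ofReal (d * (2 / a ^ 2)) * expNorm a x := by
  rw [expNorm, ← ENNReal.ofReal_mul (by positivity)]
  gcongr
  have sq_le_exp : (a * ‖x‖) ^ 2 / 2 ≤ Real.exp (a * ‖x‖) := by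
    simpa using Real.pow_div_factorial_le_exp (x := a * ‖x‖) (by positivity) 2
  calc sqNorm x ≤ d * ‖x‖ ^ 2 := sqNorm_le_mul_norm_sq x
    _ = d * (2 / a ^ 2) * ((a * ‖x‖) ^ 2 / 2) := by field_simp
    _ ≤ d * (2 / a ^ 2) * Real.exp (a * ‖x‖) := by gcongr

lemma IsSymmFun.even {α : Type*} {f : (Fin d → ℤ) → α} (hf : IsSymmFun f) : f.Even := fun x => by
  have flip := hf 1 (fun _ => true) x
  simp only [if_true, neg_one_mul, Equiv.Perm.one_apply] at flip
  exact flip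

lemma e1_add {α : Type*} [AddZeroClass α] (x y : Fin d → α) : e1 (x + y) = e1 x + e1 y := by
  unfold e1
  split_ifs <;> simp

lemma e1_neg {α : Type*} [NegZeroClass α] (x : Fin d → α) : e1 (-x) = -e1 x := by
  unfold e1
  split_ifs <;> simp

end Lattice

section Laplace

variable {d : ℕ}

/-- The multiplicative weight `e^{a x₁}` against which the moment generating function sums. -/
def expWeight (a : ℝ) (x : Fin d → ℤ) : ℝ≥0∞ := ENNReal.ofReal (Real.exp (a * (e1 x : ℤ)))

lemma expWeight_add (a : ℝ) (x y : Fin d → ℤ) :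
    expWeight a (x + y) = expWeight a x * expWeight a y := by
  rw [expWeight, e1_add, Int.cast_add, mul_add, Real.exp_add,
    ENNReal.ofReal_mul (Real.exp_nonneg _)]
  rfl

lemma two_le_expWeight_add_expWeight_neg (a : ℝ) (x : Fin d → ℤ) :
    2 ≤ expWeight a x + expWeight a (-x) := by
  rw [expWeight, expWeight, e1_neg, Int.cast_neg, mul_neg,
    ← ENNReal.ofReal_add (Real.exp_nonneg _) (Real.exp_nonneg _), ← ENNReal.ofReal_ofNat]
  gcongr
  linarith [Real.one_le_cosh (a * (e1 x : ℤ)), Real.cosh_eq (a * (e1 x : ℤ))]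

/-- The exponential moment `∑ e^{a x₁} f(x)` of `f` in the first coordinate. -/
def laplace (a : ℝ) (f : (Fin d → ℤ) → ℝ≥0∞) : ℝ≥0∞ := ∑' x, expWeight a x * f x

lemma laplace_conv (a : ℝ) (f g : (Fin d → ℤ) → ℝ≥0∞) :
    laplace a (conv f g) = laplace a f * laplace a g :=
  tsum_mul_conv (expWeight_add a) f g

lemma laplace_smul (a : ℝ) (c : ℝ≥0∞) (f : (Fin d → ℤ) → ℝ≥0∞) :
    laplace a (c • f) = c * laplace a f := by
  simp only [laplace, Pi.smul_apply, smul_eq_mul, mul_left_comm _ c, ENNReal.tsum_mul_left]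

lemma tsum_le_laplace (a : ℝ) {f : (Fin d → ℤ) → ℝ≥0∞} (hf : f.Even) :
    ∑' x, f x ≤ laplace a f := by
  have laplace_neg : ∑' x, expWeight a (-x) * f x = laplace a f := by
    rw [← (Equiv.neg _).tsum_eq]
    simp only [Equiv.neg_apply, neg_neg, hf _]
    rfl
  refine (ENNReal.mul_le_mul_iff_right two_ne_zero ENNReal.ofNat_ne_top).mp ?_
  calc 2 * ∑' x, f x = ∑' x, 2 * f x := ENNReal.tsum_mul_left.symm
    _ ≤ ∑' x, (expWeight a x + expWeight a (-x)) * f x := by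
      gcongr with x
      exact two_le_expWeight_add_expWeight_neg a x
    _ = 2 * laplace a f := by
      simp only [add_mul, ENNReal.tsum_add, laplace_neg, two_mul]
      rfl

end Laplace

namespace AdmissibleKernel

variable {d : ℕ} {c₀ : ℝ} (K : AdmissibleKernel d c₀)

lemma tsum_expNorm_mul_J_ne_top {a : ℝ} (ha : 0 ≤ a) :
    ∑' x, expNorm a x * ENNReal.ofReal (K.J x) ≠ ⊤ := by
  have pointwise_le (x) : expNorm a x * ENNReal.ofReal (K.J x) ≤
      ENNReal.ofReal (Real.exp (a * K.R)) * ENNReal.ofReal (K.J x) := by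
    rcases (K.nonneg x).eq_or_lt with hJ | hJ
    · simp [← hJ]
    · rw [expNorm, ← supNorm_eq_norm]
      gcongr
      exact K.range_le x hJ
  refine ne_top_of_le_ne_top ?_ (ENNReal.tsum_le_tsum pointwise_le)
  rw [ENNReal.tsum_mul_left]
  exact ENNReal.mul_ne_top ENNReal.ofReal_ne_top K.summable.tsum_ofReal_ne_top

end AdmissibleKernel

namespace Model

variable {d : ℕ} {c₀ : ℝ} (M : Model d c₀) {β : ℝ}

lemma F_eq_conv (β : ℝ) : M.F β = conv (fun x => ENNReal.ofReal (M.K.J x)) (M.G β) := rfl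

lemma F_even (β : ℝ) : (M.F β).Even :=
  conv_even (fun x => by rw [M.K.symm.even]) (M.symm β).even

lemma one_le_G_zero (h0 : 0 ≤ β) (hβ : ENNReal.ofReal β < M.βc) : 1 ≤ M.G β 0 := by
  simpa [M.init] using M.mono 0 le_rfl h0 hβ.le

lemma ofReal_J_le_F (h0 : 0 ≤ β) (hβ : ENNReal.ofReal β < M.βc) (x : Fin d → ℤ) :
    ENNReal.ofReal (M.K.J x) ≤ M.F β x :=
  calc ENNReal.ofReal (M.K.J x) ≤ ENNReal.ofReal (M.K.J x) * M.G β (x - x) := by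
        rw [sub_self]
        exact le_mul_of_one_le_right' (M.one_le_G_zero h0 hβ)
    _ ≤ M.F β x := ENNReal.le_tsum x

lemma exists_tsum_expNorm_mul_G_ne_top (h0 : 0 ≤ β) (hβ : ENNReal.ofReal β < M.βc) :
    ∃ a > (0 : ℝ), ∑' x, expNorm a x * M.G β x ≠ ⊤ := by
  obtain ⟨C, hC, c, hc, hG⟩ := M.expDecay h0 hβ
  have pointwise_le (x) : expNorm (c / 2) x * M.G β x ≤ ENNReal.ofReal C * expNorm (-(c / 2)) x :=
    calc expNorm (c / 2) x * M.G β x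
        ≤ expNorm (c / 2) x * (ENNReal.ofReal C * expNorm (-c) x) := by
          gcongr
          simpa only [expNorm, supNorm_eq_norm, ENNReal.ofReal_mul hC.le] using hG x
      _ = ENNReal.ofReal C * expNorm (-(c / 2)) x := by
          rw [mul_left_comm, ← expNorm_add_left, show c / 2 + -c = -(c / 2) by ring]
  refine ⟨c / 2, half_pos hc, ne_top_of_le_ne_top ?_ (ENNReal.tsum_le_tsum pointwise_le)⟩
  rw [ENNReal.tsum_mul_left]
  exact ENNReal.mul_ne_top ENNReal.ofReal_ne_top
    (tsum_expNorm_ne_top d (neg_lt_zero.mpr (half_pos hc)))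

lemma chi_ne_top (h0 : 0 ≤ β) (hβ : ENNReal.ofReal β < M.βc) : M.chi β ≠ ⊤ := by
  obtain ⟨a, ha, hG⟩ := M.exists_tsum_expNorm_mul_G_ne_top h0 hβ
  exact ne_top_of_le_ne_top hG
    (ENNReal.tsum_le_tsum fun x => le_mul_of_one_le_left' (one_le_expNorm ha.le x))

lemma chi_ne_zero (h0 : 0 ≤ β) (hβ : ENNReal.ofReal β < M.βc) : M.chi β ≠ 0 :=
  (zero_lt_one.trans_le ((M.one_le_G_zero h0 hβ).trans (ENNReal.le_tsum 0))).ne'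

lemma iSup_G_ne_top (h0 : 0 ≤ β) (hβ : ENNReal.ofReal β < M.βc) : ⨆ x, M.G β x ≠ ⊤ :=
  ne_top_of_le_ne_top (M.chi_ne_top h0 hβ) (iSup_le ENNReal.le_tsum)

lemma tsum_sqNorm_mul_F_ne_top (h0 : 0 ≤ β) (hβ : ENNReal.ofReal β < M.βc) :
    ∑' x, ENNReal.ofReal (sqNorm x) * M.F β x ≠ ⊤ := by
  obtain ⟨a, ha, hG⟩ := M.exists_tsum_expNorm_mul_G_ne_top h0 hβ
  have hF : ∑' x, expNorm a x * M.F β x ≠ ⊤ := by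
    rw [F_eq_conv]
    exact ne_top_of_le_ne_top (ENNReal.mul_ne_top (M.K.tsum_expNorm_mul_J_ne_top ha.le) hG)
      (tsum_expNorm_mul_conv_le ha.le _ _)
  have pointwise_le (x) : ENNReal.ofReal (sqNorm x) * M.F β x ≤
      ENNReal.ofReal (d * (2 / a ^ 2)) * (expNorm a x * M.F β x) := by
    rw [← mul_assoc]
    gcongr
    exact ofReal_sqNorm_le_mul_expNorm ha x
  refine ne_top_of_le_ne_top ?_ (ENNReal.tsum_le_tsum pointwise_le)
  rw [ENNReal.tsum_mul_left]
  exact ENNReal.mul_ne_top ENNReal.ofReal_ne_top hF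

lemma tsum_sqNorm_mul_F_ne_zero (h0 : 0 ≤ β) (hβ : ENNReal.ofReal β < M.βc) :
    ∑' x, ENNReal.ofReal (sqNorm x) * M.F β x ≠ 0 := by
  obtain ⟨x, hJ, -⟩ := M.K.range_attained
  have hx : x ≠ 0 := by
    rintro rfl
    exact hJ.ne' M.K.zero_at_zero
  have hF : M.F β x ≠ 0 :=
    ((ENNReal.ofReal_pos.mpr hJ).trans_le (M.ofReal_J_le_F h0 hβ x)).ne'
  exact fun h => mul_ne_zero (ENNReal.ofReal_pos.mpr (sqNorm_pos hx)).ne' hF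
    (ENNReal.tsum_eq_zero.mp h x)

lemma xi_pos (h0 : 0 ≤ β) (hβ : ENNReal.ofReal β < M.βc) : 0 < M.xi β :=
  Real.sqrt_pos.mpr <| ENNReal.toReal_pos
    (ENNReal.div_ne_zero.mpr ⟨M.tsum_sqNorm_mul_F_ne_zero h0 hβ, M.chi_ne_top h0 hβ⟩)
    (ENNReal.div_ne_top (M.tsum_sqNorm_mul_F_ne_top h0 hβ) (M.chi_ne_zero h0 hβ))

lemma Mgf_eq_laplace_div (β s : ℝ) :
    M.Mgf β s = laplace (s / M.xi β) (M.F β) / M.chi β := by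
  rw [laplace, div_eq_mul_inv, ← ENNReal.tsum_mul_right]
  refine tsum_congr fun y => ?_
  rw [effStep, div_eq_mul_inv, mul_right_comm, mul_comm (M.F β y), expWeight]

lemma chi_mul_Mgf_mul_xi (h0 : 0 ≤ β) (hβ : ENNReal.ofReal β < M.βc) (a : ℝ) :
    M.chi β * M.Mgf β (a * M.xi β) = laplace a (M.F β) := by
  rw [Mgf_eq_laplace_div, mul_div_cancel_right₀ _ (M.xi_pos h0 hβ).ne',
    ENNReal.mul_div_cancel (M.chi_ne_zero h0 hβ) (M.chi_ne_top h0 hβ)]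

variable {β' : ℝ}

lemma G_le_add_conv (h0 : 0 ≤ β') (hle : β' ≤ β) (hβ : ENNReal.ofReal β < M.βc) :
    M.G β ≤ M.G β' + conv (ENNReal.ofReal (β - β') • M.F β') (M.G β) := fun x => by
  refine (M.I1 h0 hle hβ x).trans_eq ?_
  rw [← conv_conv_apply (fun y => ENNReal.ofReal (M.K.J y)) (M.G β') (M.G β) x, ← F_eq_conv]
  simp only [conv, Pi.add_apply, Pi.smul_apply, smul_eq_mul, mul_assoc, ENNReal.tsum_mul_left]

theorem laplace_G_le (h0 : 0 ≤ β') (hle : β' ≤ β) (hβ : ENNReal.ofReal β < M.βc) {a : ℝ}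
    (ha : ENNReal.ofReal (β - β') * laplace a (M.F β') < 1) :
    laplace a (M.G β) ≤
      laplace a (M.G β') / (1 - ENNReal.ofReal (β - β') * laplace a (M.F β')) := by
  rw [← laplace_smul] at ha ⊢
  have step_even : (ENNReal.ofReal (β - β') • M.F β').Even := fun x => by
    rw [Pi.smul_apply, Pi.smul_apply, M.F_even]
  exact tsum_mul_le_div_of_le_add_conv (expWeight_add a)
    ((tsum_le_laplace a step_even).trans_lt ha) (M.iSup_G_ne_top (h0.trans hle) hβ)
    (M.G_le_add_conv h0 hle hβ)

theorem laplace_F_le (h0 : 0 ≤ β') (hle : β' ≤ β) (hβ : ENNReal.ofReal β < M.βc) {a : ℝ}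
    (ha : ENNReal.ofReal (β - β') * laplace a (M.F β') < 1) :
    laplace a (M.F β) ≤
      laplace a (M.F β') / (1 - ENNReal.ofReal (β - β') * laplace a (M.F β')) := by
  rw [M.F_eq_conv β, laplace_conv]
  refine (mul_le_mul_right (M.laplace_G_le h0 hle hβ ha) _).trans_eq ?_
  rw [← mul_div_assoc, ← laplace_conv, ← F_eq_conv]

end Model

end Blackbox

theorem statement10_general {d : ℕ} {c₀ : ℝ} (M : Model d c₀) {β' β : ℝ} (h0 : 0 ≤ β')
    (hle : β' ≤ β) (hβ : ENNReal.ofReal β < M.βc) (s : ℝ)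
    (h : ENNReal.ofReal (β - β') * M.chi β' * M.Mgf β' (s * M.xi β' / M.xi β) < 1) :
    M.Mgf β s ≤ M.chi β' / M.chi β * M.Mgf β' (s * M.xi β' / M.xi β) /
      (1 - ENNReal.ofReal (β - β') * M.chi β' * M.Mgf β' (s * M.xi β' / M.xi β)) := by
  have hβ' : ENNReal.ofReal β' < M.βc := (ENNReal.ofReal_le_ofReal hle).trans_lt hβ
  have chi_mul_Mgf : M.chi β' * M.Mgf β' (s * M.xi β' / M.xi β) =
      laplace (s / M.xi β) (M.F β') := by
    rw [mul_div_right_comm, M.chi_mul_Mgf_mul_xi h0 hβ']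
  rw [mul_assoc, chi_mul_Mgf] at h ⊢
  calc M.Mgf β s = laplace (s / M.xi β) (M.F β) / M.chi β := M.Mgf_eq_laplace_div β s
    _ ≤ laplace (s / M.xi β) (M.F β') /
        (1 - ENNReal.ofReal (β - β') * laplace (s / M.xi β) (M.F β')) / M.chi β := by
      gcongr
      exact M.laplace_F_le h0 hle hβ h
    _ = M.chi β' / M.chi β * M.Mgf β' (s * M.xi β' / M.xi β) /
        (1 - ENNReal.ofReal (β - β') * laplace (s / M.xi β) (M.F β')) := by
      rw [← chi_mul_Mgf]
      simp only [div_eq_mul_inv]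
      ring

/-- transfer of moment generating function bounds (`coro:Miteration`). -/
theorem statement10 (d : ℕ) (hd : 2 < d) (c₀ : ℝ) (hc₀ : c₀ ∈ Set.Ioc (0:ℝ) 1)
    (M : Model d c₀) (β' β : ℝ) (hβ'0 : 0 ≤ β') (hβ'β : β' ≤ β)
    (hβ : ENNReal.ofReal β < M.βc) (s : ℝ)
    (h : ENNReal.ofReal (β - β') * M.chi β' * M.Mgf β' (s * M.xi β' / M.xi β) < 1) :
    M.Mgf β s ≤ M.chi β' / M.chi β * M.Mgf β' (s * M.xi β' / M.xi β) /
      (1 - ENNReal.ofReal (β - β') * M.chi β' * M.Mgf β' (s * M.xi β' / M.xi β)) :=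
  statement10_general M hβ'0 hβ'β hβ s h
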